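/- arXiv:1009.5783 — 4 statements merged into one kernel-verified Lean document; each statement's English description precedes it below -/
import Mathlib

section
/- Let (W,S) be a finite Coxeter system with length function ℓ, and let w₀ ∈ W be an element of maximal length. Let x, y ∈ W with ℓ(x⁻¹y) = ℓ(w₀). Let J ⊆ S, g ∈ W, and suppose x₁ ∈ gW_J satisfies ℓ(x⁻¹x₁) ≤ ℓ(x⁻¹v) for all v ∈ gW_J, and y₁ ∈ gW_J satisfies ℓ(y⁻¹y₁) ≤ ℓ(y⁻¹v) for all v ∈ gW_J. Then ℓ(x⁻¹y) = ℓ(x⁻¹x₁) + ℓ(x₁⁻¹y₁) + ℓ(y₁⁻¹y). (This is the gallery-distance identity established in the proof of Lemma 'opp': the projections x₁ and y₁ lie on a shortest gallery joining the opposite chambers x and y.) -/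
namespace OppAux

open CoxeterSystem

variable {B : Type*} {W : Type*} [Group W] {M : CoxeterMatrix B} (cs : CoxeterSystem M W)

open Classical in
/-- The generator of the reflection representation on `W × ZMod 2`. -/
noncomputable def gen (i : B) : Equiv.Perm (W × ZMod 2) where
  toFun p := (cs.simple i * p.1 * cs.simple i, p.2 + if p.1 = cs.simple i then 1 else 0)
  invFun p := (cs.simple i * p.1 * cs.simple i, p.2 + if p.1 = cs.simple i then 1 else 0)
  left_inv := by
    rintro ⟨t, z⟩
    have h : cs.simple i * t * cs.simple i = cs.simple i ↔ t = cs.simple i := by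
      constructor
      · intro h
        have h2 := mul_eq_right.mp h
        have := eq_inv_of_mul_eq_one_right h2
        simpa using this
      · rintro rfl; simp
    ext
    · simp [mul_assoc]
    · simp only [h]; rw [add_assoc, CharTwo.add_self_eq_zero, add_zero]
  right_inv := by
    rintro ⟨t, z⟩
    have h : cs.simple i * t * cs.simple i = cs.simple i ↔ t = cs.simple i := by
      constructor
      · intro h
        have h2 := mul_eq_right.mp h
        have := eq_inv_of_mul_eq_one_right h2
        simpa using this
      · rintro rfl; simp
    ext
    · simp [mul_assoc]
    · simp only [h]; rw [add_assoc, CharTwo.add_self_eq_zero, add_zero]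

open Classical in
theorem gen_apply (i : B) (t : W) (z : ZMod 2) :
    gen cs i (t, z) =
      (cs.simple i * t * cs.simple i, z + if t = cs.simple i then 1 else 0) := rfl

theorem conj_pow (i j : B) (k : ℕ) :
    cs.simple j * (cs.simple i * cs.simple j) ^ k * cs.simple j =
      ((cs.simple i * cs.simple j) ^ k)⁻¹ := by
  induction k with
  | zero => simp
  | succ k ih =>
    rw [pow_succ, mul_inv_rev, ← ih]
    nth_rewrite 1 [← pow_succ]
    rw [pow_succ']
    simp [mul_assoc]

open Classical in
theorem gen_pow (i j : B) (k : ℕ) (t : W) (z : ZMod 2) :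
    ((gen cs i * gen cs j) ^ k) (t, z) =
      ((cs.simple i * cs.simple j) ^ k * t * ((cs.simple i * cs.simple j) ^ k)⁻¹,
        z + ∑ n ∈ Finset.range (2 * k),
          if t = cs.simple j * (cs.simple i * cs.simple j) ^ n then 1 else 0) := by
  induction k with
  | zero => simp
  | succ k ih =>
    rw [pow_succ', Equiv.Perm.mul_apply, ih, Equiv.Perm.mul_apply, gen_apply, gen_apply]
    have e1 : (cs.simple i * cs.simple j) ^ k * t * ((cs.simple i * cs.simple j) ^ k)⁻¹
        = cs.simple j ↔ t = cs.simple j * (cs.simple i * cs.simple j) ^ (2 * k) := by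
      have h := conj_pow cs i j k
      set r := (cs.simple i * cs.simple j) ^ k with hr
      rw [two_mul, pow_add, ← hr, mul_inv_eq_iff_eq_mul, ← eq_inv_mul_iff_mul_eq, ← h]
      simp [mul_assoc]
    have e2 : cs.simple j * ((cs.simple i * cs.simple j) ^ k * t *
        ((cs.simple i * cs.simple j) ^ k)⁻¹) * cs.simple j
        = cs.simple i ↔ t = cs.simple j * (cs.simple i * cs.simple j) ^ (2 * k + 1) := by
      have h := conj_pow cs i j k
      have h3 : (cs.simple i * cs.simple j) ^ (2 * k + 1) = (cs.simple i * cs.simple j) ^ k *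
          (cs.simple i * cs.simple j) * (cs.simple i * cs.simple j) ^ k := by
        rw [← pow_succ, ← pow_add]; congr 1; omega
      have h4 : Commute ((cs.simple i * cs.simple j) ^ k) (cs.simple i * cs.simple j) :=
        (Commute.refl _).pow_left k
      rw [h3]
      set r := (cs.simple i * cs.simple j) ^ k with hr
      have h5 : cs.simple j * (r * (cs.simple i * cs.simple j) * r) =
          r⁻¹ * (cs.simple j * cs.simple i * cs.simple j) * r := by
        rw [← h]; simp [mul_assoc]
      rw [h5]
      constructor
      · intro h6
        rw [← h6]; simp [mul_assoc]
      · rintro rfl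
        simp [mul_assoc]
    have hs : 2 * (k + 1) = 2 * k + 1 + 1 := by ring
    rw [hs, Finset.sum_range_succ, Finset.sum_range_succ, pow_succ']
    ext
    · simp [mul_assoc]
    · simp only [e1, e2, add_assoc]

theorem gen_liftable : M.IsLiftable (gen cs) := by
  classical
  intro i j
  ext1 p
  obtain ⟨t, z⟩ := p
  rw [gen_pow, two_mul, Finset.sum_range_add]
  simp only [pow_add, cs.simple_mul_simple_pow, one_mul]
  rw [CharTwo.add_self_eq_zero]
  simp

/-- The reflection representation on `W × ZMod 2`. -/
noncomputable def rep : W →* Equiv.Perm (W × ZMod 2) := cs.lift ⟨gen cs, gen_liftable cs⟩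

theorem rep_simple (i : B) : rep cs (cs.simple i) = gen cs i := by
  simp [rep]

/-- The reflection cocycle. -/
noncomputable def eta (w t : W) : ZMod 2 := (rep cs w (t, 0)).2

theorem rep_apply (w t : W) (z : ZMod 2) : rep cs w (t, z) = (w * t * w⁻¹, z + eta cs w t) := by
  induction w using cs.simple_induction_left generalizing t z with
  | one => simp [eta]
  | mul_simple_left w i ih =>
    simp only [eta]
    rw [map_mul, Equiv.Perm.mul_apply, Equiv.Perm.mul_apply, ih, ih, rep_simple, gen_apply,
      gen_apply]
    ext
    · simp [mul_assoc]
    · simp [add_assoc]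

theorem eta_mul (a b t : W) : eta cs (a * b) t = eta cs b t + eta cs a (b * t * b⁻¹) := by
  rw [eta, map_mul, Equiv.Perm.mul_apply, rep_apply, rep_apply]
  simp

theorem eta_one (t : W) : eta cs 1 t = 0 := by simp [eta]

open Classical in
theorem eta_simple (i : B) (t : W) :
    eta cs (cs.simple i) t = if t = cs.simple i then 1 else 0 := by
  rw [eta, rep_simple, gen_apply]; simp

theorem mem_ris (ω : List B) (t : W) (h : eta cs (cs.wordProd ω) t ≠ 0) :
    t ∈ cs.rightInvSeq ω := by
  classical
  induction ω with
  | nil => simp [eta_one] at h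
  | cons i ω ih =>
    rw [cs.wordProd_cons, eta_mul, eta_simple] at h
    rw [rightInvSeq, List.mem_cons]
    by_cases h1 : cs.wordProd ω * t * (cs.wordProd ω)⁻¹ = cs.simple i
    · left; rw [← h1]; simp [mul_assoc]
    · right; apply ih; simpa [h1] using h

theorem inv_of_eta {w t : W} (h : eta cs w t ≠ 0) : cs.IsRightInversion w t := by
  obtain ⟨ω, hω, rfl⟩ := cs.exists_isReduced w
  exact cs.isRightInversion_of_mem_rightInvSeq hω (mem_ris cs ω t h)

theorem eta_self {t : W} (ht : cs.IsReflection t) : eta cs t t = 1 := by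
  obtain ⟨w, i, rfl⟩ := ht
  have h0 := eta_mul cs w w⁻¹ (w * cs.simple i * w⁻¹)
  have h1 := eta_mul cs (w * cs.simple i) w⁻¹ (w * cs.simple i * w⁻¹)
  have h2 : w⁻¹ * (w * cs.simple i * w⁻¹) * w⁻¹⁻¹ = cs.simple i := by simp [mul_assoc]
  rw [h2] at h0 h1
  rw [h1, eta_mul, eta_simple]
  rw [mul_inv_cancel, eta_one] at h0
  simp only [if_true, mul_inv_cancel_right]
  linear_combination -h0

theorem eta_of_inv {w t : W} (h : cs.IsRightInversion w t) : eta cs w t = 1 := by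
  have key : ∀ z : ZMod 2, z ≠ 0 → z = 1 := by decide
  apply key
  intro h0
  have h1 := eta_mul cs w t t
  rw [eta_self cs h.1, mul_inv_cancel_right, h0] at h1
  have h2 := (inv_of_eta cs (w := w * t) (t := t) (by rw [h1]; simp)).2
  rw [mul_assoc, h.1.mul_self, mul_one] at h2
  exact absurd h.2 (by omega)

/-- Lengths add when no reflection is inverted twice. -/
theorem length_add (n : ℕ) : ∀ u v : W, cs.length v = n →
    (∀ t, eta cs u t = 1 → eta cs v⁻¹ t = 1 → False) →
    cs.length (u * v) = cs.length u + cs.length v := by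
  classical
  induction n with
  | zero =>
    intro u v hv _
    rw [cs.length_eq_zero_iff] at hv
    simp [hv]
  | succ n ih =>
    intro u v hv h
    have hv1 : v ≠ 1 := by rintro rfl; simp at hv
    obtain ⟨i, hi⟩ := cs.exists_leftDescent_of_ne_one hv1
    obtain ⟨v', rfl⟩ : ∃ v', v = cs.simple i * v' := ⟨cs.simple i * v, by simp⟩
    have hl := (cs.isLeftDescent_iff).1 hi
    rw [cs.simple_mul_simple_cancel_left] at hl
    have hinv : ∀ t, eta cs (cs.simple i * v')⁻¹ t =
        (if t = cs.simple i then 1 else 0) + eta cs v'⁻¹ (cs.simple i * t * cs.simple i) := by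
      intro t
      rw [mul_inv_rev, cs.inv_simple, eta_mul, eta_simple, cs.inv_simple]
    have hsi : eta cs (cs.simple i * v')⁻¹ (cs.simple i) = 1 := by
      apply eta_of_inv
      rw [cs.isRightInversion_inv_iff, cs.isLeftInversion_simple_iff_isLeftDescent]
      exact hi
    have hv's : eta cs v'⁻¹ (cs.simple i) = 0 := by
      have := hinv (cs.simple i)
      rw [hsi] at this
      simpa using this
    have hus : ¬ cs.IsRightDescent u i := by
      intro hd
      rw [← cs.isRightInversion_simple_iff_isRightDescent] at hd
      exact h _ (eta_of_inv cs hd) hsi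
    have hus' := cs.not_isRightDescent_iff.1 hus
    have := ih (u * cs.simple i) v' (by omega) (by
      intro t h1 h2
      have hts : t ≠ cs.simple i := by
        rintro rfl
        rw [hv's] at h2; simp at h2
      rw [eta_mul, eta_simple, if_neg hts, zero_add, cs.inv_simple] at h1
      apply h _ h1
      rw [hinv]
      have h3 : cs.simple i * (cs.simple i * t * cs.simple i) * cs.simple i = t := by
        simp [mul_assoc]
      have h4 : cs.simple i * t * cs.simple i ≠ cs.simple i := by
        intro h5
        apply hts
        rw [← h3, h5]; simp
      rw [if_neg h4, h3, h2, zero_add])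
    rw [← mul_assoc, this]
    omega

theorem eta_mem (J : Set B) {v : W} (hv : v ∈ Subgroup.closure (cs.simple '' J)) :
    ∀ t, t ∉ Subgroup.closure (cs.simple '' J) → eta cs v t = 0 := by
  classical
  have hc : ∀ b ∈ Subgroup.closure (cs.simple '' J), ∀ t,
      t ∉ Subgroup.closure (cs.simple '' J) →
      b * t * b⁻¹ ∉ Subgroup.closure (cs.simple '' J) := by
    intro b hb t ht h
    apply ht
    have := mul_mem (mul_mem (inv_mem hb) h) hb
    simpa [mul_assoc] using this
  induction hv using Subgroup.closure_induction with
  | mem v hv =>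
    intro t ht
    obtain ⟨i, hi, rfl⟩ := hv
    rw [eta_simple, if_neg]
    rintro rfl
    exact ht (Subgroup.subset_closure ⟨i, hi, rfl⟩)
  | one => intro t _; exact eta_one cs t
  | mul a b ha hb iha ihb =>
    intro t ht
    rw [eta_mul, ihb t ht, iha _ (hc b hb t ht), zero_add]
  | inv a ha iha =>
    intro t ht
    have h := eta_mul cs a a⁻¹ t
    rw [mul_inv_cancel, eta_one, iha _ (hc _ (inv_mem ha) t ht), add_zero] at h
    exact h.symm

theorem length_max (w : W) (hw : ∀ v : W, cs.length v ≤ cs.length w) (v : W) :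
    cs.length w = cs.length v + cs.length (v⁻¹ * w) := by
  have h := length_add cs _ v (v⁻¹ * w) rfl (by
    intro t h1 h2
    have ht : cs.IsReflection t := (inv_of_eta cs (by rw [h1]; simp)).1
    have h3 : eta cs w⁻¹ (v * t * v⁻¹) = 1 := by
      apply eta_of_inv
      refine ⟨ht.conj v, lt_of_le_of_ne ?_ ((ht.conj v).length_mul_left_ne _)⟩
      rw [cs.length_inv w]; exact hw _
    rw [mul_inv_rev, inv_inv, eta_mul, h1, h3] at h2
    exact absurd h2 (by decide))
  rwa [mul_inv_cancel_left] at h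

theorem length_gate (J : Set B) (u v : W) (hv : v ∈ Subgroup.closure (cs.simple '' J))
    (hu : ∀ t ∈ Subgroup.closure (cs.simple '' J), cs.length u ≤ cs.length (u * t)) :
    cs.length (u * v) = cs.length u + cs.length v := by
  refine length_add cs _ u v rfl ?_
  intro t h1 h2
  have ht := (inv_of_eta cs (w := u) (t := t) (by rw [h1]; simp)).2
  by_cases hm : t ∈ Subgroup.closure (cs.simple '' J)
  · exact absurd (hu t hm) (by omega)
  · rw [eta_mem cs J (inv_mem hv) t hm] at h2
    simp at h2

end OppAux

/-- Gallery-distance identity from the proof of Lemma "opp": the projections `x₁`, `y₁`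
of two opposite chambers `x`, `y` to a residue `g • W_J` lie on a shortest gallery
joining `x` and `y`. -/
theorem opp_gallery_distance_identity
    {B : Type*} {W : Type*} [Group W] [Finite W] {M : CoxeterMatrix B}
    (cs : CoxeterSystem M W)
    (w₀ : W) (hw₀ : ∀ w : W, cs.length w ≤ cs.length w₀)
    (x y : W) (hxy : cs.length (x⁻¹ * y) = cs.length w₀)
    (J : Set B) (g : W)
    (WJ : Subgroup W) (hWJ : WJ = Subgroup.closure (cs.simple '' J))
    (x₁ : W) (hx₁ : g⁻¹ * x₁ ∈ WJ)
    (hx₁min : ∀ v : W, g⁻¹ * v ∈ WJ → cs.length (x⁻¹ * x₁) ≤ cs.length (x⁻¹ * v))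
    (y₁ : W) (hy₁ : g⁻¹ * y₁ ∈ WJ)
    (hy₁min : ∀ v : W, g⁻¹ * v ∈ WJ → cs.length (y⁻¹ * y₁) ≤ cs.length (y⁻¹ * v)) :
    cs.length (x⁻¹ * y) =
      cs.length (x⁻¹ * x₁) + cs.length (x₁⁻¹ * y₁) + cs.length (y₁⁻¹ * y) := by
  subst hWJ
  have h1 := OppAux.length_max cs (x⁻¹ * y) (fun v => by rw [hxy]; exact hw₀ v) (x⁻¹ * y₁)
  have h2 := OppAux.length_gate cs J (x⁻¹ * x₁) (x₁⁻¹ * y₁)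
    (by have := mul_mem (inv_mem hx₁) hy₁; simpa [mul_assoc] using this)
    (by
      intro t ht
      rw [mul_assoc]
      apply hx₁min
      rw [← mul_assoc]
      exact mul_mem hx₁ ht)
  have e1 : (x⁻¹ * y₁)⁻¹ * (x⁻¹ * y) = y₁⁻¹ * y := by simp [mul_assoc]
  have e2 : x⁻¹ * x₁ * (x₁⁻¹ * y₁) = x⁻¹ * y₁ := by simp [mul_assoc]
  rw [e1] at h1
  rw [e2] at h2
  rw [h1, h2]
end

section
/- Let (W,S) be a finite Coxeter system with length function ℓ, and let w₀ ∈ W be an element of maximal length. Let x, y ∈ W with ℓ(x⁻¹y) = ℓ(w₀), let J ⊆ S, g ∈ W, and suppose x₁ ∈ gW_J satisfies ℓ(x⁻¹x₁) ≤ ℓ(x⁻¹v) for all v ∈ gW_J, and y₁ ∈ gW_J satisfies ℓ(y⁻¹y₁) ≤ ℓ(y⁻¹v) for all v ∈ gW_J. If z ∈ gW_J is any chamber opposite to x₁ in the residue, i.e. x₁⁻¹z ∈ W_J and ℓ(x₁⁻¹z) = max{ℓ(z') : z' ∈ W_J}, then z = y₁. (Uniqueness statement established in the proof of Lemma 'opp':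 the projection of y to the residue is the unique chamber of the residue opposite the projection of x.) -/
open Classical in
/-- The signed conjugation permutation attached to a simple reflection. -/
noncomputable def oppFlip {B W : Type*} [Group W] {M : CoxeterMatrix B}
    (cs : CoxeterSystem M W) (i : B) : Equiv.Perm (W × ZMod 2) :=
  Function.Involutive.toPerm
    (fun p => (cs.simple i * p.1 * cs.simple i, p.2 + if p.1 = cs.simple i then 1 else 0))
    (by
      rintro ⟨t, e⟩
      have h : cs.simple i * t * cs.simple i = cs.simple i ↔ t = cs.simple i := by
        constructor
        · intro h
          have h2 : cs.simple i * t = 1 := by simpa using h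
          have := eq_inv_of_mul_eq_one_right h2
          simpa using this
        · rintro rfl
          simp
      ext
      · simp [mul_assoc]
      · simp only [h]
        rw [add_assoc, CharTwo.add_self_eq_zero, add_zero])

open Classical in
theorem oppFlip_apply {B W : Type*} [Group W] {M : CoxeterMatrix B}
    (cs : CoxeterSystem M W) (i : B) (t : W) (e : ZMod 2) :
    oppFlip cs i (t, e) =
      (cs.simple i * t * cs.simple i, e + if t = cs.simple i then 1 else 0) := rfl

open Classical in
theorem oppFlip_pow {B W : Type*} [Group W] {M : CoxeterMatrix B}
    (cs : CoxeterSystem M W) (i j : B) (m : ℕ) (t : W) (e : ZMod 2) :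
    ((oppFlip cs i * oppFlip cs j) ^ m) (t, e) =
      ((cs.simple i * cs.simple j) ^ m * t * ((cs.simple i * cs.simple j) ^ m)⁻¹,
        e + ∑ n ∈ Finset.range (2 * m),
          if t = cs.simple j * (cs.simple i * cs.simple j) ^ n then 1 else 0) := by
  set c := cs.simple i * cs.simple j with hc
  have hjc : ∀ k : ℕ, cs.simple j * c ^ k * cs.simple j = (c ^ k)⁻¹ := by
    intro k
    have h1 : cs.simple j * c * (cs.simple j)⁻¹ = c⁻¹ := by simp [hc, mul_assoc]
    have := congrArg (· ^ k) h1
    simp only [conj_pow, inv_pow] at this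
    rwa [cs.inv_simple] at this
  have hjc' : ∀ k : ℕ, cs.simple j * c ^ k = (c ^ k)⁻¹ * cs.simple j := by
    intro k
    rw [← hjc k]; simp
  induction m with
  | zero => simp
  | succ m ih =>
    rw [pow_succ', Equiv.Perm.mul_apply, ih, Equiv.Perm.mul_apply, oppFlip_apply, oppFlip_apply,
      show 2 * (m + 1) = 2 * m + 1 + 1 by ring, Finset.sum_range_succ, Finset.sum_range_succ]
    have e1 : c ^ m * t * (c ^ m)⁻¹ = cs.simple j ↔ t = cs.simple j * c ^ (2 * m) := by
      rw [mul_inv_eq_iff_eq_mul, ← eq_inv_mul_iff_mul_eq, ← mul_assoc, ← hjc', two_mul, pow_add,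
        mul_assoc]
    have e2 : cs.simple j * (c ^ m * t * (c ^ m)⁻¹) * cs.simple j = cs.simple i ↔
        t = cs.simple j * c ^ (2 * m + 1) := by
      have : cs.simple j * c ^ (2 * m + 1) = (c ^ m)⁻¹ * (cs.simple j * c) * c ^ m := by
        rw [show 2 * m + 1 = m + 1 + m by ring, pow_add, pow_succ, ← mul_assoc, ← mul_assoc,
          hjc']
        simp only [mul_assoc]
      rw [this]
      have h3 : cs.simple i = cs.simple j * (cs.simple j * c) * cs.simple j := by
        simp [hc]
      constructor
      · intro h
        rw [h3] at h
        have h4 := mul_left_cancel (mul_right_cancel h)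
        rw [← h4]; group
      · rintro rfl
        rw [h3]; group
    ext
    · simp [hc, pow_succ', mul_assoc]
    · simp only [e1, e2, add_assoc]

open Classical in
theorem oppFlip_liftable {B W : Type*} [Group W] {M : CoxeterMatrix B}
    (cs : CoxeterSystem M W) : M.IsLiftable (oppFlip cs) := by
  intro i j
  ext1 ⟨t, e⟩
  rw [oppFlip_pow, two_mul, Finset.sum_range_add]
  simp only [pow_add, cs.simple_mul_simple_pow, one_mul, CharTwo.add_self_eq_zero]
  simp

/-- The signed conjugation action. -/
noncomputable def oppAct {B W : Type*} [Group W] {M : CoxeterMatrix B}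
    (cs : CoxeterSystem M W) : W →* Equiv.Perm (W × ZMod 2) :=
  cs.lift ⟨oppFlip cs, oppFlip_liftable cs⟩

/-- The parity cocycle. -/
noncomputable def oppEta {B W : Type*} [Group W] {M : CoxeterMatrix B}
    (cs : CoxeterSystem M W) (w t : W) : ZMod 2 := (oppAct cs w (t, 0)).2

open Classical in
theorem oppAct_wordProd {B W : Type*} [Group W] {M : CoxeterMatrix B}
    (cs : CoxeterSystem M W) (ω : List B) (t : W) (e : ZMod 2) :
    oppAct cs (cs.wordProd ω) (t, e) =
      (cs.wordProd ω * t * (cs.wordProd ω)⁻¹, e + ((cs.rightInvSeq ω).count t : ZMod 2)) := by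
  induction ω with
  | nil => simp
  | cons i ω ih =>
    rw [cs.wordProd_cons, map_mul, Equiv.Perm.mul_apply, ih]
    have : oppAct cs (cs.simple i) = oppFlip cs i := cs.lift_apply_simple (oppFlip_liftable cs) i
    rw [this, oppFlip_apply]
    have e1 : cs.wordProd ω * t * (cs.wordProd ω)⁻¹ = cs.simple i ↔
        (cs.wordProd ω)⁻¹ * cs.simple i * cs.wordProd ω = t := by
      rw [eq_comm, mul_assoc, mul_assoc, inv_mul_eq_iff_eq_mul, ← mul_assoc,
        eq_mul_inv_iff_mul_eq]
    ext
    · simp [mul_assoc]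
    · simp only [CoxeterSystem.rightInvSeq, List.count_cons, e1, beq_iff_eq]
      push_cast
      rw [add_assoc]

theorem oppAct_apply {B W : Type*} [Group W] {M : CoxeterMatrix B}
    (cs : CoxeterSystem M W) (w t : W) (e : ZMod 2) :
    oppAct cs w (t, e) = (w * t * w⁻¹, e + oppEta cs w t) := by
  obtain ⟨ω, rfl⟩ := cs.wordProd_surjective w
  simp [oppEta, oppAct_wordProd]

open Classical in
theorem oppEta_wordProd {B W : Type*} [Group W] {M : CoxeterMatrix B}
    (cs : CoxeterSystem M W) (ω : List B) (t : W) :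
    oppEta cs (cs.wordProd ω) t = ((cs.rightInvSeq ω).count t : ZMod 2) := by
  simp [oppEta, oppAct_wordProd]

theorem oppEta_mul {B W : Type*} [Group W] {M : CoxeterMatrix B}
    (cs : CoxeterSystem M W) (a b t : W) :
    oppEta cs (a * b) t = oppEta cs b t + oppEta cs a (b * t * b⁻¹) := by
  have h : (oppAct cs (a * b) (t, 0)).2 = (oppAct cs a (oppAct cs b (t, 0))).2 := by
    rw [map_mul, Equiv.Perm.mul_apply]
  rw [oppAct_apply, oppAct_apply, oppAct_apply] at h
  simpa using h

theorem oppEta_mem {B W : Type*} [Group W] {M : CoxeterMatrix B}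
    (cs : CoxeterSystem M W) (ω : List B) (t : W)
    (h : oppEta cs (cs.wordProd ω) t ≠ 0) : t ∈ cs.rightInvSeq ω := by
  classical
  by_contra hn
  apply h
  rw [oppEta_wordProd, List.count_eq_zero_of_not_mem hn]
  simp

theorem oppEta_lt {B W : Type*} [Group W] {M : CoxeterMatrix B}
    (cs : CoxeterSystem M W) (w t : W)
    (h : oppEta cs w t ≠ 0) : cs.length (w * t) < cs.length w := by
  obtain ⟨ω, hω, rfl⟩ := cs.exists_isReduced w
  exact (cs.isRightInversion_of_mem_rightInvSeq hω (oppEta_mem cs ω t h)).2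

theorem oppEta_refl {B W : Type*} [Group W] {M : CoxeterMatrix B}
    (cs : CoxeterSystem M W) (t : W) (ht : cs.IsReflection t) : oppEta cs t t = 1 := by
  obtain ⟨w, i, rfl⟩ := ht
  have h1 := oppEta_mul cs w w⁻¹ (w * cs.simple i * w⁻¹)
  have h0 : oppEta cs 1 (w * cs.simple i * w⁻¹) = 0 := by simp [oppEta]
  have hs : oppEta cs (cs.simple i) (cs.simple i) = 1 := by
    have := oppEta_wordProd cs [i] (cs.simple i)
    simpa using this
  have hc : w⁻¹ * (w * cs.simple i * w⁻¹) * w⁻¹⁻¹ = cs.simple i := by group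
  rw [mul_inv_cancel, h0, hc] at h1
  rw [oppEta_mul cs (w * cs.simple i) w⁻¹, hc, oppEta_mul, hs, mul_inv_cancel_right]
  linear_combination -h1

theorem oppEta_iff {B W : Type*} [Group W] {M : CoxeterMatrix B}
    (cs : CoxeterSystem M W) (w t : W) (ht : cs.IsReflection t) :
    cs.length (w * t) < cs.length w ↔ oppEta cs w t = 1 := by
  constructor
  · intro h
    by_contra hn
    have h0 : oppEta cs w t = 0 := by
      generalize oppEta cs w t = a at *
      revert a; decide
    have h1 : oppEta cs (w * t) t = 1 := by
      rw [oppEta_mul, oppEta_refl cs t ht, mul_inv_cancel_right, h0, add_zero]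
    have := oppEta_lt cs (w * t) t (by rw [h1]; decide)
    rw [mul_assoc, ht.mul_self, mul_one] at this
    omega
  · intro h
    exact oppEta_lt cs w t (by rw [h]; decide)

theorem opp_reduced_word {B W : Type*} [Group W] {M : CoxeterMatrix B}
    (cs : CoxeterSystem M W) (J : Set B) (w : W)
    (hw : w ∈ Subgroup.closure (cs.simple '' J)) :
    ∃ ω : List B, (∀ i ∈ ω, i ∈ J) ∧ cs.IsReduced ω ∧ w = cs.wordProd ω := by
  have key : ∀ w : W, (∃ ω : List B, (∀ i ∈ ω, i ∈ J) ∧ cs.IsReduced ω ∧ w = cs.wordProd ω) →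
      ∀ j ∈ J, ∃ ω : List B, (∀ i ∈ ω, i ∈ J) ∧ cs.IsReduced ω ∧
        w * cs.simple j = cs.wordProd ω := by
    rintro _ ⟨ω, hJ, hr, rfl⟩ j hj
    rcases cs.length_mul_simple (cs.wordProd ω) j with h | h
    · refine ⟨ω ++ [j], ?_, ?_, ?_⟩
      · intro i hi
        rcases List.mem_append.1 hi with hi | hi
        · exact hJ i hi
        · rw [List.mem_singleton.1 hi]; exact hj
      · unfold CoxeterSystem.IsReduced at *
        rw [cs.wordProd_append, cs.wordProd_singleton, h, hr]; simp
      · rw [cs.wordProd_append, cs.wordProd_singleton]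
    · have h1 := (oppEta_iff cs (cs.wordProd ω) _ (cs.isReflection_simple j)).1 (by omega)
      have h2 := oppEta_mem cs ω _ (by rw [h1]; decide)
      obtain ⟨k, hk, hk2⟩ := List.mem_iff_getElem.1 h2
      have hk3 : k < ω.length := by simpa using hk
      have h3 := cs.wordProd_mul_getD_rightInvSeq ω k
      rw [List.getD_eq_getElem _ _ hk, hk2] at h3
      refine ⟨ω.eraseIdx k, fun i hi => hJ i (List.mem_of_mem_eraseIdx hi), ?_, h3⟩
      unfold CoxeterSystem.IsReduced at *
      rw [← h3, List.length_eraseIdx_of_lt hk3]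
      omega
  induction hw using Subgroup.closure_induction_right with
  | one => exact ⟨[], by simp, by simp [CoxeterSystem.IsReduced], by simp⟩
  | mul_right a ha b hb ih =>
    obtain ⟨j, hj, rfl⟩ := hb
    exact key _ ih j hj
  | mul_inv_cancel a ha b hb ih =>
    obtain ⟨j, hj, rfl⟩ := hb
    rw [cs.inv_simple]
    exact key _ ih j hj

theorem opp_exists_descent {B W : Type*} [Group W] {M : CoxeterMatrix B}
    (cs : CoxeterSystem M W) (J : Set B) (w : W)
    (hw : w ∈ Subgroup.closure (cs.simple '' J)) (h1 : w ≠ 1) :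
    ∃ j ∈ J, cs.length (w * cs.simple j) < cs.length w := by
  obtain ⟨ω, hJ, hr, rfl⟩ := opp_reduced_word cs J w hw
  rcases List.eq_nil_or_concat ω with rfl | ⟨ω', j, rfl⟩
  · simp at h1
  · refine ⟨j, hJ j (by simp), ?_⟩
    have h2 := cs.length_wordProd_le ω'
    rw [hr.eq, List.concat_eq_append, cs.wordProd_append, cs.wordProd_singleton]
    simp
    omega

/-- Uniqueness statement from the proof of Lemma "opp": the projection of `y` to the
residue `g • W_J` is the unique chamber of the residue opposite the projection of `x`. -/
theorem opp_projection_unique_opposite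
    {B : Type*} {W : Type*} [Group W] [Finite W] {M : CoxeterMatrix B}
    (cs : CoxeterSystem M W)
    (w₀ : W) (hw₀ : ∀ w : W, cs.length w ≤ cs.length w₀)
    (x y : W) (hxy : cs.length (x⁻¹ * y) = cs.length w₀)
    (J : Set B) (g : W)
    (WJ : Subgroup W) (hWJ : WJ = Subgroup.closure (cs.simple '' J))
    (x₁ : W) (hx₁ : g⁻¹ * x₁ ∈ WJ)
    (hx₁min : ∀ v : W, g⁻¹ * v ∈ WJ → cs.length (x⁻¹ * x₁) ≤ cs.length (x⁻¹ * v))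
    (y₁ : W) (hy₁ : g⁻¹ * y₁ ∈ WJ)
    (hy₁min : ∀ v : W, g⁻¹ * v ∈ WJ → cs.length (y⁻¹ * y₁) ≤ cs.length (y⁻¹ * v))
    (z : W) (hz : g⁻¹ * z ∈ WJ)
    (hzopp : x₁⁻¹ * z ∈ WJ ∧ ∀ z' ∈ WJ, cs.length z' ≤ cs.length (x₁⁻¹ * z)) :
    z = y₁ := by
  subst hWJ
  by_contra hne
  set WJ := Subgroup.closure (cs.simple '' J) with hWJ
  have hzy : z⁻¹ * y₁ ∈ WJ := by
    have := WJ.mul_mem (WJ.inv_mem hz) hy₁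
    simpa [mul_assoc] using this
  have hxy1 : x₁⁻¹ * y₁ ∈ WJ := by
    have := WJ.mul_mem (WJ.inv_mem hx₁) hy₁
    simpa [mul_assoc] using this
  obtain ⟨j, hj, hdesc⟩ := opp_exists_descent cs J (z⁻¹ * y₁) hzy (by
    intro h
    exact hne (inv_mul_eq_one.1 h))
  have hjW : cs.simple j ∈ WJ := Subgroup.subset_closure ⟨j, hj, rfl⟩
  have hrefl := cs.isReflection_simple j
  obtain ⟨r, hr⟩ : ∃ r, r = y₁ * cs.simple j * y₁⁻¹ := ⟨_, rfl⟩
  have hrr : cs.IsReflection r := hr ▸ hrefl.conj y₁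
  have hru : ∀ u : W, cs.IsReflection (u⁻¹ * r * u) := fun u => by
    simpa using hrr.conj u⁻¹
  -- reflections in the residue stay in the parabolic subgroup
  have hrW : ∀ u : W, u⁻¹ * y₁ ∈ WJ → u⁻¹ * r * u ∈ WJ := by
    intro u hu
    have := WJ.mul_mem (WJ.mul_mem hu hjW) (WJ.inv_mem hu)
    rw [hr]
    simpa [mul_assoc] using this
  have tri : ∀ a b c : W, oppEta cs (a⁻¹ * c) (c⁻¹ * r * c) =
      oppEta cs (b⁻¹ * c) (c⁻¹ * r * c) + oppEta cs (a⁻¹ * b) (b⁻¹ * r * b) := by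
    intro a b c
    have h := oppEta_mul cs (a⁻¹ * b) (b⁻¹ * c) (c⁻¹ * r * c)
    have h2 : b⁻¹ * c * (c⁻¹ * r * c) * (b⁻¹ * c)⁻¹ = b⁻¹ * r * b := by group
    have h3 : a⁻¹ * b * (b⁻¹ * c) = a⁻¹ * c := by group
    rwa [h2, h3] at h
  have zero_of : ∀ a : ZMod 2, a ≠ 1 → a = 0 := by decide
  have hy1r : y₁⁻¹ * r * y₁ = cs.simple j := by rw [hr]; group
  have s1 : oppEta cs (z⁻¹ * y₁) (y₁⁻¹ * r * y₁) = 1 := by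
    rw [hy1r]; exact (oppEta_iff cs _ _ hrefl).1 hdesc
  have far : ∀ a u : W, u⁻¹ * y₁ ∈ WJ → g⁻¹ * u ∈ WJ →
      (∀ v : W, g⁻¹ * v ∈ WJ → cs.length (a⁻¹ * u) ≤ cs.length (a⁻¹ * v)) →
      oppEta cs (a⁻¹ * u) (u⁻¹ * r * u) = 0 := by
    intro a u hu hgu hmin
    apply zero_of
    intro h
    have h1 := (oppEta_iff cs _ _ (hru u)).2 h
    have h2 := hmin (u * (u⁻¹ * r * u)) (by
      rw [← mul_assoc]; exact WJ.mul_mem hgu (hrW u hu))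
    rw [← mul_assoc] at h2
    omega
  have near : ∀ a u : W, cs.length (a⁻¹ * u * (u⁻¹ * r * u)) ≤ cs.length (a⁻¹ * u) →
      oppEta cs (a⁻¹ * u) (u⁻¹ * r * u) = 1 := by
    intro a u h
    exact (oppEta_iff cs _ _ (hru u)).1 (lt_of_le_of_ne h ((hru u).length_mul_left_ne _))
  have s2 := far y y₁ (by simp) hy₁ hy₁min
  have s3 := far x x₁ hxy1 hx₁ hx₁min
  have s4 := near x y (by rw [hxy]; exact hw₀ _)
  have s5 := near x₁ z (hzopp.2 _ (WJ.mul_mem hzopp.1 (hrW z hzy)))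
  have t1 := tri x y y₁
  have t2 := tri x x₁ y₁
  have t3 := tri x₁ z y₁
  rw [s2, s4] at t1
  rw [t1, s3] at t2
  rw [s1, s5] at t3
  rw [t3] at t2
  revert t2
  decide
end

section
/- Let (W,S) be a finite Coxeter system with length function ℓ and let w₀ ∈ W be an element of maximal length. Let J, K ⊆ S and g, h ∈ W. Set R = gW_J and X = hW_K, and define P = {u ∈ R : there exists x ∈ X with ℓ(x⁻¹u) ≤ ℓ(x⁻¹v) for all v ∈ R} (the set of projections to R of chambers of the residue X) and Q = {u ∈ R : there exists x ∈ X with ℓ((x·w₀)⁻¹u) ≤ ℓ((x·w₀)⁻¹v) for all v ∈ R} (the set of projections to R of chambers of the residue opposite to X). Then for every u ∈ P there exists v ∈ Q with u⁻¹v ∈ W_J and ℓ(u⁻¹v) = max{ℓ(z) : z ∈ W_J}, and for every v ∈ Q there exists u ∈ P with v⁻¹u ∈ W_J and ℓ(v⁻¹u) = max{ℓ(z) : z ∈ W_J}. (This is Corollary 'cor1' of the paper expressed in the Coxeter complex: every chamber of the projection of a residue X to R has an opposite, in the residue R, lying in the projection of the residue opposite X.) -/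
open Classical in
/-- The involution of `W × ZMod 2` attached to a simple reflection. -/
noncomputable def cox1F {B W : Type*} [Group W] {M : CoxeterMatrix B}
    (cs : CoxeterSystem M W) (i : B) (x : W × ZMod 2) : W × ZMod 2 :=
  (cs.simple i * x.1 * cs.simple i, x.2 + if x.1 = cs.simple i then 1 else 0)

open Classical in
theorem cox1F_invol {B W : Type*} [Group W] {M : CoxeterMatrix B}
    (cs : CoxeterSystem M W) (i : B) : Function.Involutive (cox1F cs i) := by
  rintro ⟨t, e⟩
  have h2 : (1 : ZMod 2) + 1 = 0 := by decide
  have h1 : (cs.simple i * t * cs.simple i = cs.simple i) ↔ t = cs.simple i := by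
    constructor
    · intro h
      have h' : cs.simple i * t = 1 := by simpa using h
      rw [← inv_eq_iff_mul_eq_one] at h'
      simpa using h'.symm
    · rintro rfl; simp
  refine Prod.ext (by simp [cox1F, mul_assoc]) ?_
  change e + (if t = cs.simple i then 1 else 0) +
    (if cs.simple i * t * cs.simple i = cs.simple i then 1 else 0) = e
  by_cases ht : t = cs.simple i
  · rw [if_pos ht, if_pos (h1.2 ht), add_assoc, h2, add_zero]
  · rw [if_neg ht, if_neg (mt h1.1 ht), add_zero, add_zero]

noncomputable def cox1P {B W : Type*} [Group W] {M : CoxeterMatrix B}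
    (cs : CoxeterSystem M W) (i : B) : Equiv.Perm (W × ZMod 2) :=
  (cox1F_invol cs i).toPerm

open Classical in
theorem cox1P_pow {B W : Type*} [Group W] {M : CoxeterMatrix B}
    (cs : CoxeterSystem M W) (i j : B) (n : ℕ) (t : W) (e : ZMod 2) :
    ((cox1P cs i * cox1P cs j) ^ n) (t, e) =
      ((cs.simple i * cs.simple j) ^ n * t * ((cs.simple i * cs.simple j) ^ n)⁻¹,
        e + ∑ l ∈ Finset.range (2 * n),
          if t = cs.simple j * (cs.simple i * cs.simple j) ^ l then 1 else 0) := by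
  induction n with
  | zero => simp
  | succ n ih =>
    rw [pow_succ', Equiv.Perm.mul_apply, ih]
    set p := cs.simple i * cs.simple j with hp
    have hpi : p⁻¹ = cs.simple j * cs.simple i := by simp [hp]
    have hc : ∀ k : ℕ, cs.simple j * p ^ k = (p ^ k)⁻¹ * cs.simple j := by
      intro k
      induction k with
      | zero => simp
      | succ k ih =>
        calc cs.simple j * p ^ (k + 1) = (cs.simple j * p ^ k) * p := by rw [pow_succ, mul_assoc]
          _ = (p ^ k)⁻¹ * (p⁻¹ * cs.simple j) := by
            rw [ih, hpi, mul_assoc]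
            congr 1
            rw [hp, mul_assoc]
          _ = (p ^ (k + 1))⁻¹ * cs.simple j := by
            rw [pow_succ', mul_inv_rev p (p ^ k), mul_assoc]
    have e1 : (p ^ n * t * (p ^ n)⁻¹ = cs.simple j) ↔ t = cs.simple j * p ^ (2 * n) := by
      rw [two_mul, pow_add, ← mul_assoc, hc, mul_inv_eq_iff_eq_mul, mul_assoc, eq_inv_mul_iff_mul_eq]
    have e2 : (cs.simple j * (p ^ n * t * (p ^ n)⁻¹) * cs.simple j = cs.simple i) ↔
        t = cs.simple j * p ^ (2 * n + 1) := by
      have : cs.simple j * p ^ (2 * n + 1) = (p ^ n)⁻¹ * (cs.simple j * p) * p ^ n := by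
        rw [show 2 * n + 1 = n + (1 + n) by ring, pow_add, ← mul_assoc, hc, pow_add, pow_one]
        simp only [mul_assoc]
      rw [this]
      constructor
      · intro h
        have hsp : cs.simple j * p = cs.simple j * cs.simple i * cs.simple j := by
          rw [hp, mul_assoc]
        rw [hsp, ← h]
        simp [mul_assoc]
      · rintro rfl
        simp [mul_assoc, hp]
    rw [show 2 * (n + 1) = 2 * n + 1 + 1 by ring, Finset.sum_range_succ, Finset.sum_range_succ]
    change cox1F cs i (cox1F cs j _) = _
    simp only [cox1F, e1, e2, Prod.mk.injEq]
    refine ⟨?_, by ring⟩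
    rw [pow_succ', mul_inv_rev, hpi]
    simp [hp, mul_assoc]

theorem cox1P_lift {B W : Type*} [Group W] {M : CoxeterMatrix B}
    (cs : CoxeterSystem M W) : M.IsLiftable (cox1P cs) := by
  classical
  intro i j
  ext1 ⟨t, e⟩
  rw [cox1P_pow, two_mul, Finset.sum_range_add]
  simp only [pow_add, cs.simple_mul_simple_pow, one_mul]
  have h2 : ∀ x : ZMod 2, x + x = 0 := by decide
  simp [h2]

noncomputable def cox1Phi {B W : Type*} [Group W] {M : CoxeterMatrix B}
    (cs : CoxeterSystem M W) : W →* Equiv.Perm (W × ZMod 2) :=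
  cs.lift ⟨cox1P cs, cox1P_lift cs⟩

noncomputable def cox1Eta {B W : Type*} [Group W] {M : CoxeterMatrix B}
    (cs : CoxeterSystem M W) (w t : W) : ZMod 2 := (cox1Phi cs w (t, 0)).2

open Classical in
theorem cox1Phi_word {B W : Type*} [Group W] {M : CoxeterMatrix B}
    (cs : CoxeterSystem M W) (ω : List B) (t : W) (e : ZMod 2) :
    cox1Phi cs (cs.wordProd ω) (t, e) =
      (cs.wordProd ω * t * (cs.wordProd ω)⁻¹, e + ((cs.rightInvSeq ω).count t : ZMod 2)) := by
  induction ω with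
  | nil => simp
  | cons i ω ih =>
    rw [cs.wordProd_cons, map_mul, Equiv.Perm.mul_apply, ih]
    have : cox1Phi cs (cs.simple i) = cox1P cs i := by
      simp [cox1Phi]
    rw [this]
    change cox1F cs i _ = _
    have e1 : (cs.wordProd ω * t * (cs.wordProd ω)⁻¹ = cs.simple i) ↔
        ((cs.wordProd ω)⁻¹ * cs.simple i * cs.wordProd ω = t) := by
      rw [mul_inv_eq_iff_eq_mul, mul_assoc, inv_mul_eq_iff_eq_mul, eq_comm]
    simp only [cox1F, e1, Prod.mk.injEq, CoxeterSystem.rightInvSeq, List.count_cons, beq_iff_eq]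
    refine ⟨by simp [mul_assoc], ?_⟩
    push_cast
    split_ifs <;> simp [add_assoc]

open Classical in
theorem cox1Eta_word {B W : Type*} [Group W] {M : CoxeterMatrix B}
    (cs : CoxeterSystem M W) (ω : List B) (t : W) :
    cox1Eta cs (cs.wordProd ω) t = ((cs.rightInvSeq ω).count t : ZMod 2) := by
  simp [cox1Eta, cox1Phi_word]

theorem cox1Phi_apply {B W : Type*} [Group W] {M : CoxeterMatrix B}
    (cs : CoxeterSystem M W) (w : W) (t : W) (e : ZMod 2) :
    cox1Phi cs w (t, e) = (w * t * w⁻¹, e + cox1Eta cs w t) := by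
  obtain ⟨ω, rfl⟩ := cs.wordProd_surjective w
  rw [cox1Phi_word, cox1Eta_word]

theorem cox1Eta_mul {B W : Type*} [Group W] {M : CoxeterMatrix B}
    (cs : CoxeterSystem M W) (a b t : W) :
    cox1Eta cs (a * b) t = cox1Eta cs b t + cox1Eta cs a (b * t * b⁻¹) := by
  have h : (cox1Phi cs (a * b) (t, 0)).2 = (cox1Phi cs a (cox1Phi cs b (t, 0))).2 := by
    rw [map_mul, Equiv.Perm.mul_apply]
  rw [cox1Phi_apply, cox1Phi_apply cs b, cox1Phi_apply cs a] at h
  simpa only [zero_add] using h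

theorem cox1Eta_one {B W : Type*} [Group W] {M : CoxeterMatrix B}
    (cs : CoxeterSystem M W) (t : W) : cox1Eta cs 1 t = 0 := by
  simp [cox1Eta]

theorem cox1Eta_simple {B W : Type*} [Group W] {M : CoxeterMatrix B}
    (cs : CoxeterSystem M W) (i : B) (t : W) :
    cox1Eta cs (cs.simple i) t = 1 ↔ t = cs.simple i := by
  classical
  have := cox1Eta_word cs [i] t
  simp only [CoxeterSystem.wordProd_singleton, CoxeterSystem.rightInvSeq_singleton,
    List.count_singleton, beq_iff_eq] at this
  rw [this]
  by_cases h : t = cs.simple i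
  · simp [h]
  · simp [h, Ne.symm h]

theorem cox1Eta_refl {B W : Type*} [Group W] {M : CoxeterMatrix B}
    (cs : CoxeterSystem M W) (t : W) (ht : cs.IsReflection t) : cox1Eta cs t t = 1 := by
  obtain ⟨u, i, rfl⟩ := ht
  have h0 := cox1Eta_mul cs u u⁻¹ (u * cs.simple i * u⁻¹)
  have hs : u⁻¹ * (u * cs.simple i * u⁻¹) * u⁻¹⁻¹ = cs.simple i := by group
  rw [hs, mul_inv_cancel, cox1Eta_one] at h0
  have h1 := cox1Eta_mul cs (u * cs.simple i) u⁻¹ (u * cs.simple i * u⁻¹)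
  rw [hs, cox1Eta_mul cs u, (cox1Eta_simple cs i _).2 rfl] at h1
  have hs2 : cs.simple i * cs.simple i * (cs.simple i)⁻¹ = cs.simple i := by group
  rw [hs2] at h1
  rw [h1]
  linear_combination -h0

/-- Inversion set as a set. -/
def cox1N {B W : Type*} [Group W] {M : CoxeterMatrix B}
    (cs : CoxeterSystem M W) (w : W) : Set W := {t | cox1Eta cs w t = 1}

theorem cox1N_eq {B W : Type*} [Group W] {M : CoxeterMatrix B}
    (cs : CoxeterSystem M W) (ω : List B) (hω : cs.IsReduced ω) (t : W) :
    cox1Eta cs (cs.wordProd ω) t = 1 ↔ t ∈ cs.rightInvSeq ω := by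
  classical
  rw [cox1Eta_word]
  by_cases h : t ∈ cs.rightInvSeq ω
  · simp [h, List.count_eq_one_of_mem hω.nodup_rightInvSeq h]
  · simp [h, List.count_eq_zero_of_not_mem h]

theorem cox1N_card {B W : Type*} [Group W] {M : CoxeterMatrix B}
    (cs : CoxeterSystem M W) (w : W) : (cox1N cs w).ncard = cs.length w := by
  classical
  obtain ⟨ω, hω, rfl⟩ := cs.exists_isReduced w
  have : cox1N cs (cs.wordProd ω) = ((cs.rightInvSeq ω).toFinset : Set W) := by
    ext t
    simp [cox1N, cox1N_eq cs ω hω]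
  rw [this, Set.ncard_coe_finset, List.toFinset_card_of_nodup hω.nodup_rightInvSeq,
    cs.length_rightInvSeq, hω.eq]

theorem cox1Eta_inv {B W : Type*} [Group W] {M : CoxeterMatrix B}
    (cs : CoxeterSystem M W) (w t : W) (h : cox1Eta cs w t = 1) : cs.IsRightInversion w t := by
  obtain ⟨ω, hω, rfl⟩ := cs.exists_isReduced w
  exact cs.isRightInversion_of_mem_rightInvSeq hω ((cox1N_eq cs ω hω t).1 h)

theorem cox1Eta_iff {B W : Type*} [Group W] {M : CoxeterMatrix B}
    (cs : CoxeterSystem M W) (w t : W) :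
    cox1Eta cs w t = 1 ↔ cs.IsRightInversion w t := by
  refine ⟨cox1Eta_inv cs w t, fun h => ?_⟩
  by_contra hne
  have h0 : cox1Eta cs w t = 0 := by
    revert hne; generalize cox1Eta cs w t = x; revert x; decide
  have h1 := cox1Eta_mul cs w t t
  rw [cox1Eta_refl cs t h.1, mul_inv_cancel_right, h0, add_zero] at h1
  have h2 := (cox1Eta_inv cs _ _ h1).2
  rw [mul_assoc, h.1.mul_self, mul_one] at h2
  exact absurd h.2 (by omega)

theorem cox1_longest {B W : Type*} [Group W] [Finite W] {M : CoxeterMatrix B}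
    (cs : CoxeterSystem M W) (w₀ : W) (hw₀ : ∀ w : W, cs.length w ≤ cs.length w₀) (w : W) :
    cs.length (w₀ * w) + cs.length w = cs.length w₀ := by
  have hT : cox1N cs w₀ = {t | cs.IsReflection t} := by
    ext t
    simp only [cox1N, Set.mem_ofPred_eq, cox1Eta_iff]
    exact ⟨fun h => h.1, fun h => ⟨h, lt_of_le_of_ne (hw₀ _) (h.length_mul_left_ne w₀)⟩⟩
  have hsub : cox1N cs w ⊆ cox1N cs w₀ := by
    rw [hT]; intro t ht; exact (cox1Eta_inv cs _ _ ht).1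
  have hd : cox1N cs (w₀ * w) = cox1N cs w₀ \ cox1N cs w := by
    ext t
    rw [hT]
    by_cases ht : cs.IsReflection t
    · have h1 : cox1Eta cs w₀ (w * t * w⁻¹) = 1 := by
        have : w * t * w⁻¹ ∈ cox1N cs w₀ := by rw [hT]; exact ht.conj w
        exact this
      simp only [cox1N, Set.mem_ofPred_eq, Set.mem_sdiff, ht, true_and, cox1Eta_mul, h1]
      generalize cox1Eta cs w t = x; revert x; decide
    · simp only [cox1N, Set.mem_ofPred_eq, Set.mem_sdiff, ht, false_and, iff_false]
      exact fun h => ht (cox1Eta_inv cs _ _ h).1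
  rw [← cox1N_card, ← cox1N_card cs w, ← cox1N_card cs w₀, hd]
  exact Set.ncard_sdiff_add_ncard_of_subset hsub

theorem cox1_parab {B W : Type*} [Group W] {M : CoxeterMatrix B}
    (cs : CoxeterSystem M W) (J : Set B) (z : W)
    (hz : z ∈ Subgroup.closure (cs.simple '' J)) :
    ∀ t, cox1Eta cs z t = 1 → t ∈ Subgroup.closure (cs.simple '' J) := by
  induction hz using Subgroup.closure_induction with
  | mem x hx =>
    obtain ⟨i, hi, rfl⟩ := hx
    intro t ht
    rw [cox1Eta_simple] at ht
    rw [ht]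
    exact Subgroup.subset_closure ⟨i, hi, rfl⟩
  | one => intro t ht; simp [cox1Eta_one] at ht
  | mul a b ha hb iha ihb =>
    intro t ht
    rw [cox1Eta_mul] at ht
    have : cox1Eta cs b t = 1 ∨ cox1Eta cs a (b * t * b⁻¹) = 1 := by
      revert ht
      generalize cox1Eta cs b t = x
      generalize cox1Eta cs a (b * t * b⁻¹) = y
      revert x y; decide
    rcases this with h | h
    · exact ihb t h
    · have := mul_mem (mul_mem (inv_mem hb) (iha _ h)) hb
      simpa [mul_assoc] using this
  | inv b hb ih =>
    intro t ht
    have h := cox1Eta_mul cs b b⁻¹ t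
    rw [mul_inv_cancel, cox1Eta_one, ht, inv_inv] at h
    have h' : cox1Eta cs b (b⁻¹ * t * b) = 1 := by
      revert h
      generalize cox1Eta cs b (b⁻¹ * t * b) = y
      revert y; decide
    have := mul_mem (mul_mem hb (ih _ h')) (inv_mem hb)
    simpa [mul_assoc] using this

theorem cox1_coset {B W : Type*} [Group W] [Finite W] {M : CoxeterMatrix B}
    (cs : CoxeterSystem M W) (J : Set B) (a : W)
    (ha : ∀ z ∈ Subgroup.closure (cs.simple '' J), cs.length a ≤ cs.length (a * z)) (z : W)
    (hz : z ∈ Subgroup.closure (cs.simple '' J)) :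
    cs.length (a * z) = cs.length a + cs.length z := by
  have hdis : ∀ t, cox1Eta cs z t = 1 → cox1Eta cs a (z * t * z⁻¹) ≠ 1 := by
    intro t ht h
    have := (cox1Eta_inv cs _ _ h).2
    have h2 := ha _ (mul_mem (mul_mem hz (cox1_parab cs J z hz t ht)) (inv_mem hz))
    omega
  let f : W → W := fun t => z⁻¹ * t * z
  have hf : Function.Injective f := by
    intro x y h
    simpa [f] using h
  have hmem : ∀ t, t ∈ f '' cox1N cs a ↔ cox1Eta cs a (z * t * z⁻¹) = 1 := by
    intro t
    constructor
    · rintro ⟨r, hr, rfl⟩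
      simpa [f, mul_assoc, cox1N] using hr
    · intro h
      exact ⟨_, h, by simp [f, mul_assoc]⟩
  have hu : cox1N cs (a * z) = f '' cox1N cs a ∪ cox1N cs z := by
    ext t
    rw [Set.mem_union, hmem]
    simp only [cox1N, Set.mem_ofPred_eq, cox1Eta_mul]
    have := hdis t
    revert this
    generalize cox1Eta cs z t = x
    generalize cox1Eta cs a (z * t * z⁻¹) = y
    revert x y; decide
  have hd : Disjoint (f '' cox1N cs a) (cox1N cs z) := by
    rw [Set.disjoint_left]
    intro t h1 h2
    exact hdis t h2 ((hmem t).1 h1)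
  rw [← cox1N_card, ← cox1N_card cs a, ← cox1N_card cs z, hu,
    Set.ncard_union_eq hd, Set.ncard_image_of_injective _ hf]

/-- Corollary "cor1" in the Coxeter complex: every chamber of the projection of a
residue `X = h • W_K` to the residue `R = g • W_J` has an opposite, in the residue `R`,
lying in the projection to `R` of the residue opposite `X`. -/
theorem cor1_projections_of_opposite_residues
    {B : Type*} {W : Type*} [Group W] [Finite W] {M : CoxeterMatrix B}
    (cs : CoxeterSystem M W)
    (w₀ : W) (hw₀ : ∀ w : W, cs.length w ≤ cs.length w₀)
    (J K : Set B) (g h : W)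
    (WJ WK : Subgroup W)
    (hWJ : WJ = Subgroup.closure (cs.simple '' J))
    (hWK : WK = Subgroup.closure (cs.simple '' K))
    (P Q : Set W)
    (hP : P = {u : W | g⁻¹ * u ∈ WJ ∧ ∃ x : W, h⁻¹ * x ∈ WK ∧
      ∀ v : W, g⁻¹ * v ∈ WJ → cs.length (x⁻¹ * u) ≤ cs.length (x⁻¹ * v)})
    (hQ : Q = {u : W | g⁻¹ * u ∈ WJ ∧ ∃ x : W, h⁻¹ * x ∈ WK ∧
      ∀ v : W, g⁻¹ * v ∈ WJ → cs.length ((x * w₀)⁻¹ * u) ≤ cs.length ((x * w₀)⁻¹ * v)}) :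
    (∀ u ∈ P, ∃ v ∈ Q, u⁻¹ * v ∈ WJ ∧
        ∀ z ∈ WJ, cs.length z ≤ cs.length (u⁻¹ * v)) ∧
    (∀ v ∈ Q, ∃ u ∈ P, v⁻¹ * u ∈ WJ ∧
        ∀ z ∈ WJ, cs.length z ≤ cs.length (v⁻¹ * u)) := by

  subst hWJ hWK hP hQ
  have hw₀' : ∀ w : W, cs.length w ≤ cs.length w₀⁻¹ := by simpa using hw₀
  have key : ∀ x u : W, cs.length ((x * w₀)⁻¹ * u) + cs.length (x⁻¹ * u) = cs.length w₀ := by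
    intro x u
    have := cox1_longest cs w₀⁻¹ hw₀' (x⁻¹ * u)
    rw [cs.length_inv] at this
    rw [mul_inv_rev, mul_assoc]
    exact this
  have hproj : ∀ x u : W, g⁻¹ * u ∈ Subgroup.closure (cs.simple '' J) →
      (∀ v : W, g⁻¹ * v ∈ Subgroup.closure (cs.simple '' J) →
        cs.length (x⁻¹ * u) ≤ cs.length (x⁻¹ * v)) →
      ∀ v, g⁻¹ * v ∈ Subgroup.closure (cs.simple '' J) →
        cs.length (x⁻¹ * v) = cs.length (x⁻¹ * u) + cs.length (u⁻¹ * v) := by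
    intro x u hu hmin v hv
    have hz : u⁻¹ * v ∈ Subgroup.closure (cs.simple '' J) := by
      have := mul_mem (inv_mem hu) hv
      simpa [mul_assoc] using this
    have := cox1_coset cs J (x⁻¹ * u) (fun z hz => by
      rw [mul_assoc]
      exact hmin _ (by rw [← mul_assoc]; exact mul_mem hu hz)) _ hz
    simpa [mul_assoc] using this
  constructor
  · rintro u ⟨hu, x, hx, hmin⟩
    obtain ⟨z, hz, hzmax⟩ := Set.exists_max_image
      (Subgroup.closure (cs.simple '' J) : Set W) cs.length (Set.toFinite _) ⟨1, one_mem _⟩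
    have huz : g⁻¹ * (u * z) ∈ Subgroup.closure (cs.simple '' J) := by
      rw [← mul_assoc]; exact mul_mem hu hz
    refine ⟨u * z, ⟨huz, x, hx, ?_⟩, by simpa using hz, by simpa using hzmax⟩
    intro v hv
    have h1 := hproj x u hu hmin v hv
    have h2 := hproj x u hu hmin _ huz
    rw [inv_mul_cancel_left] at h2
    have h3 := hzmax (u⁻¹ * v) (by
      have := mul_mem (inv_mem hu) hv
      simpa [mul_assoc] using this)
    have h4 := key x v
    have h5 := key x (u * z)
    omega
  · rintro v ⟨hv, x, hx, hmax⟩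
    obtain ⟨u, hu, hmin⟩ := Set.exists_min_image
      {u : W | g⁻¹ * u ∈ Subgroup.closure (cs.simple '' J)} (fun u => cs.length (x⁻¹ * u))
      (Set.toFinite _) ⟨v, hv⟩
    refine ⟨u, ⟨hu, x, hx, hmin⟩, ?_, ?_⟩
    · have := mul_mem (inv_mem hv) hu
      simpa [mul_assoc] using this
    · intro z hz
      have huz : g⁻¹ * (u * z) ∈ Subgroup.closure (cs.simple '' J) := by
        rw [← mul_assoc]; exact mul_mem hu hz
      have h1 := hproj x u hu hmin v hv
      have h2 := hproj x u hu hmin _ huz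
      rw [inv_mul_cancel_left] at h2
      have h3 := hmax _ huz
      have h4 := key x v
      have h5 := key x (u * z)
      have h6 : cs.length (v⁻¹ * u) = cs.length (u⁻¹ * v) := by
        rw [← cs.length_inv]; simp
      omega
end

section
/- Let (W,S) be a finite Coxeter system with length function ℓ. Let i, j ∈ S with i ≠ j be such that the corresponding reflections do not commute, i.e. s_i s_j ≠ s_j s_i (the order of s_i s_j is at least 3). Let K ⊆ S with i ∈ K and j ∉ K. Then for every w ∈ W_K, every element u of the coset s_j·W_K with ℓ(w⁻¹u) minimal among elements of s_j·W_K satisfies u ∈ s_j·W_{K∖{i}}. (This is the key projection step in the proof of the main Theorem: since the reflections of types i and j do not commute, the projection of the residue W_K to the adjacent residue s_j·W_K is contained in the smaller residue s_j·W_{K∖{i}}; in building language, the projected simplex y₀ = proj_{x₁}(x₀) has x₁ as a face and the type-i vertex ℓ as a vertex.) -/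
namespace ProjRes

open Polynomial.Chebyshev Module

/-! ### The geometric representation, used only for `s j ∉ W_K` when `j ∉ K` -/

/-- The `i`-th coroot of the geometric representation. -/
noncomputable def coroot {B : Type*} (M : CoxeterMatrix B) (i : B) : Dual ℝ (B →₀ ℝ) :=
  Finsupp.linearCombination ℝ (fun k => -2 * Real.cos (Real.pi / (M i k : ℝ)))

lemma coroot_single {B : Type*} (M : CoxeterMatrix B) (i k : B) :
    coroot M i (Finsupp.single k 1) = -2 * Real.cos (Real.pi / (M i k : ℝ)) := by
  simp [coroot]

lemma coroot_self {B : Type*} (M : CoxeterMatrix B) (i : B) :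
    coroot M i (Finsupp.single i 1) = 2 := by
  rw [coroot_single, M.diagonal]; simp

/-- The `i`-th reflection of the geometric representation. -/
noncomputable def refl {B : Type*} (M : CoxeterMatrix B) (i : B) : (B →₀ ℝ) ≃ₗ[ℝ] (B →₀ ℝ) :=
  Module.reflection (coroot_self M i)

lemma refl_liftable {B : Type*} (M : CoxeterMatrix B) : M.IsLiftable (refl M) := by
  intro i j
  by_cases hij : i = j
  · subst hij
    rw [M.diagonal, pow_one]
    ext1 z
    exact Module.involutive_reflection (coroot_self M i) z
  have hm1 : M i j ≠ 1 := M.off_diagonal i j hij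
  have hsym : M j i = M i j := M.symmetric j i
  apply LinearEquiv.ext
  intro z
  have h1 := coroot_single M i j
  have h2 := coroot_single M j i
  rw [hsym] at h2
  generalize M i j = m at *
  have key := Module.reflection_mul_reflection_pow_apply (coroot_self M i) (coroot_self M j) m z
    (2 * Real.cos (2 * Real.pi / m))
    (by rw [h1, h2, mul_div_assoc, Real.cos_two_mul]; ring)
  unfold refl
  rw [key, h1, h2]
  rcases Nat.lt_or_ge m 3 with h3 | h3
  · interval_cases m
    · simp
    · exact absurd rfl hm1
    · have e1 : ((2:ℕ):ℤ) / 2 = 1 := by norm_num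
      have e2 : (((2:ℕ):ℤ) - 2) / 2 = 0 := by norm_num
      have e3 : (((2:ℕ):ℤ) - 1) / 2 = 0 := by norm_num
      have e4 : (((2:ℕ):ℤ) - 3) / 2 = -1 := by norm_num
      rw [e1, e2, e3, e4]
      have e5 : 2 * Real.pi / ((2:ℕ):ℝ) = Real.pi := by push_cast; ring
      rw [e5]
      simp
      module
  · have hm0 : (m : ℝ) ≠ 0 := by positivity
    set θ := 2 * Real.pi / (m : ℝ) with hθ
    have hmθ : (m : ℝ) * θ = 2 * Real.pi := by rw [hθ]; field_simp
    have hs : Real.sin θ ≠ 0 := by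
      apply ne_of_gt
      apply Real.sin_pos_of_pos_of_lt_pi
      · rw [hθ]; positivity
      · rw [hθ, div_lt_iff₀ (by positivity)]
        have : (3 : ℝ) ≤ m := by exact_mod_cast h3
        nlinarith [Real.pi_pos]
    obtain ⟨k, hk | hk⟩ := Nat.even_or_odd' m
    · have e2 : ((m:ℤ) - 2) / 2 = k - 1 := by omega
      have e3 : ((m:ℤ) - 1) / 2 = k - 1 := by omega
      have h0 : (S ℝ ((k:ℤ) - 1)).eval (2 * Real.cos θ) = 0 := by
        have := S_two_mul_real_cos θ ((k:ℤ) - 1)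
        have h' : (((k:ℤ) - 1 : ℤ) + 1 : ℝ) * θ = Real.pi := by
          rw [hk] at hmθ; push_cast at hmθ ⊢; linarith
        rw [h', Real.sin_pi] at this
        exact (mul_eq_zero.mp this).resolve_right hs
      rw [e2, e3, h0]
      simp
    · have e1 : (m:ℤ) / 2 = k := by omega
      have e2 : ((m:ℤ) - 2) / 2 = k - 1 := by omega
      have e3 : ((m:ℤ) - 1) / 2 = k := by omega
      have e4 : ((m:ℤ) - 3) / 2 = k - 1 := by omega
      have h0 : (S ℝ (k:ℤ)).eval (2 * Real.cos θ) + (S ℝ ((k:ℤ) - 1)).eval (2 * Real.cos θ) = 0 := by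
        have a1 := S_two_mul_real_cos θ ((k:ℤ) - 1)
        have a2 := S_two_mul_real_cos θ (k:ℤ)
        have h' : (((k:ℤ) : ℝ) + 1 : ℝ) * θ = 2 * Real.pi - (((k:ℤ) - 1 : ℤ) + 1 : ℝ) * θ := by
          rw [hk] at hmθ; push_cast at hmθ ⊢; linarith
        rw [h', Real.sin_two_pi_sub, ← a1] at a2
        apply (mul_eq_zero.mp _).resolve_right hs
        linarith
      rw [e1, e2, e3, e4, h0]
      simp

lemma simple_notMem {B W : Type*} [Group W] {M : CoxeterMatrix B} (cs : CoxeterSystem M W)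
    (K : Set B) (j : B) (hj : j ∉ K) : cs.simple j ∉ Subgroup.closure (cs.simple '' K) := by
  classical
  set F := cs.lift ⟨refl M, refl_liftable M⟩ with hF
  have hFs : ∀ k, F (cs.simple k) = refl M k := fun k => cs.lift_apply_simple (refl_liftable M) k
  have hinv : ∀ x ∈ Subgroup.closure (cs.simple '' K), ∀ v, (F x v) j = v j := by
    intro x hx
    induction hx using Subgroup.closure_induction with
    | mem x hx =>
      obtain ⟨k, hk, rfl⟩ := hx
      intro v
      have hkj : k ≠ j := fun h => hj (h ▸ hk)
      rw [hFs, refl, Module.reflection_apply]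
      simp [hkj]
    | one => intro v; simp
    | mul x y _ _ hx hy =>
      intro v
      rw [map_mul, LinearEquiv.mul_apply, hx, hy]
    | inv x _ hx =>
      intro v
      rw [← hx (F x⁻¹ v), ← LinearEquiv.mul_apply, ← map_mul, mul_inv_cancel, map_one]
      rfl
  intro h
  have := hinv _ h (Finsupp.single j 1)
  rw [hFs, refl, Module.reflection_apply_self] at this
  simp at this
  norm_num at this

/-! ### The inversion cocycle (strong exchange) -/

section cocycle
open Classical

variable {B W : Type*} [Group W] {M : CoxeterMatrix B} (cs : CoxeterSystem M W)

/-- Action of a simple reflection on `W × {±1}`. -/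
noncomputable def act (i : B) : Function.End (W × ZMod 2) := fun p =>
  (cs.simple i * p.1 * (cs.simple i)⁻¹, p.2 + if p.1 = cs.simple i then 1 else 0)

lemma act_mul_pow (i j : B) (n : ℕ) (p : W × ZMod 2) :
    ((act cs i * act cs j) ^ n) p =
      ((cs.simple i * cs.simple j) ^ n * p.1 * ((cs.simple i * cs.simple j) ^ n)⁻¹,
        p.2 + ∑ l ∈ Finset.range (2 * n),
          if p.1 = cs.simple j * (cs.simple i * cs.simple j) ^ l then 1 else 0) := by
  induction n with
  | zero => simp; rfl
  | succ n ih =>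
    rw [pow_succ']
    change act cs i (act cs j (((act cs i * act cs j) ^ n) p)) = _
    rw [ih]
    obtain ⟨t, e⟩ := p
    set r := cs.simple i * cs.simple j with hr
    have hjj : cs.simple j * cs.simple j = 1 := cs.simple_mul_simple_self j
    have hii : cs.simple i * cs.simple i = 1 := cs.simple_mul_simple_self i
    have hconj : cs.simple j * r * (cs.simple j)⁻¹ = r⁻¹ := by
      rw [hr, mul_inv_rev, cs.inv_simple, cs.inv_simple, mul_assoc, mul_assoc, hjj, mul_one]
    have hpow : ∀ n : ℕ, (r ^ n)⁻¹ * cs.simple j = cs.simple j * r ^ n := by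
      intro n
      rw [← inv_pow, ← hconj, conj_pow]; group
    have c1 : (r ^ n * t * (r ^ n)⁻¹ = cs.simple j) ↔ t = cs.simple j * r ^ (2 * n) := by
      rw [mul_inv_eq_iff_eq_mul, ← eq_inv_mul_iff_mul_eq, ← mul_assoc, hpow, mul_assoc, ← pow_add,
        two_mul]
    have c2 : (cs.simple j * (r ^ n * t * (r ^ n)⁻¹) * (cs.simple j)⁻¹ = cs.simple i) ↔
        t = cs.simple j * r ^ (2 * n + 1) := by
      have : cs.simple j * r ^ (2 * n + 1) = (r ^ n)⁻¹ * (cs.simple j * r) * r ^ n := by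
        rw [← mul_assoc, hpow, mul_assoc, mul_assoc, ← pow_succ', ← pow_add]
        congr 2; ring
      rw [this, hr, mul_inv_eq_iff_eq_mul, ← eq_inv_mul_iff_mul_eq, mul_inv_eq_iff_eq_mul,
        ← eq_inv_mul_iff_mul_eq, cs.inv_simple]
      simp only [mul_assoc]
    simp only [act, Prod.mk.injEq, c1, c2]
    constructor
    · rw [pow_succ']
      generalize r ^ n = q
      rw [hr]
      simp only [mul_inv_rev, mul_assoc]
    · rw [show 2 * (n + 1) = 2 * n + 1 + 1 by ring, Finset.sum_range_succ, Finset.sum_range_succ]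
      ring

lemma act_liftable : M.IsLiftable (act cs) := by
  intro i j
  funext p
  rw [act_mul_pow, cs.simple_mul_simple_pow]
  have : ∑ l ∈ Finset.range (2 * M i j),
      (if p.1 = cs.simple j * (cs.simple i * cs.simple j) ^ l then (1 : ZMod 2) else 0) = 0 := by
    rw [two_mul, Finset.sum_range_add]
    simp only [pow_add, cs.simple_mul_simple_pow, one_mul]
    exact CharTwo.add_self_eq_zero _
  rw [this]
  simp
  rfl

/-- The inversion cocycle: `eta w t = 1` iff `t` is a right inversion of `w`. -/
noncomputable def eta (w t : W) : ZMod 2 := (cs.lift ⟨act cs, act_liftable cs⟩ w (t, 0)).2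

lemma eta_word (ω : List B) (p : W × ZMod 2) :
    cs.lift ⟨act cs, act_liftable cs⟩ (cs.wordProd ω) p =
      (cs.wordProd ω * p.1 * (cs.wordProd ω)⁻¹, p.2 + ((cs.rightInvSeq ω).count p.1 : ZMod 2)) := by
  induction ω with
  | nil => simp; rfl
  | cons i ω ih =>
    rw [cs.wordProd_cons, map_mul, cs.lift_apply_simple]
    change act cs i (cs.lift ⟨act cs, act_liftable cs⟩ (cs.wordProd ω) p) = _
    rw [ih]
    have c : (cs.wordProd ω * p.1 * (cs.wordProd ω)⁻¹ = cs.simple i) ↔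
        (cs.wordProd ω)⁻¹ * cs.simple i * cs.wordProd ω = p.1 := by
      constructor
      · intro h; rw [← h]; group
      · intro h; rw [← h]; group
    simp only [act, CoxeterSystem.rightInvSeq, List.count_cons, beq_iff_eq, c, Prod.mk.injEq]
    constructor
    · group
    · push_cast; ring

lemma eta_full (w : W) (p : W × ZMod 2) :
    cs.lift ⟨act cs, act_liftable cs⟩ w p = (w * p.1 * w⁻¹, p.2 + eta cs w p.1) := by
  obtain ⟨ω, -, rfl⟩ := cs.exists_isReduced w
  rw [eta, eta_word, eta_word]
  simp

lemma eta_mul (x y t : W) : eta cs (x * y) t = eta cs y t + eta cs x (y * t * y⁻¹) := by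
  have h := eta_full cs (x * y) (t, 0)
  rw [map_mul] at h
  change cs.lift ⟨act cs, act_liftable cs⟩ x (cs.lift ⟨act cs, act_liftable cs⟩ y (t, 0)) = _ at h
  rw [eta_full, eta_full] at h
  have := congrArg Prod.snd h
  simpa using this.symm

lemma eta_one (t : W) : eta cs 1 t = 0 := by
  rw [eta, map_one]; rfl

lemma eta_simple (i : B) (t : W) : eta cs (cs.simple i) t = if t = cs.simple i then 1 else 0 := by
  rw [eta, cs.lift_apply_simple]; simp [act]

lemma length_lt_of_eta (w t : W) (h : eta cs w t ≠ 0) :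
    cs.length (w * t) < cs.length w := by
  obtain ⟨ω, hω, rfl⟩ := cs.exists_isReduced w
  rw [eta, eta_word] at h
  have hmem : t ∈ cs.rightInvSeq ω := by
    by_contra hn
    rw [List.count_eq_zero_of_not_mem hn] at h
    simp at h
  exact (cs.isRightInversion_of_mem_rightInvSeq hω hmem).2

lemma eta_of_length_lt (w : W) (k : B) (h : cs.length (w * cs.simple k) < cs.length w) :
    eta cs w (cs.simple k) ≠ 0 := by
  intro h0
  have h1 : eta cs (w * cs.simple k) (cs.simple k) ≠ 0 := by
    rw [eta_mul, eta_simple]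
    simp [h0]
  have := length_lt_of_eta cs _ _ h1
  rw [mul_assoc, cs.simple_mul_simple_self, mul_one] at this
  omega

lemma eta_mem (K : Set B) (g : W) (hg : g ∈ Subgroup.closure (cs.simple '' K)) :
    ∀ t, eta cs g t ≠ 0 → t ∈ Subgroup.closure (cs.simple '' K) := by
  have hmul : ∀ x y t : W, x ∈ Subgroup.closure (cs.simple '' K) →
      (x * t * x⁻¹ ∈ Subgroup.closure (cs.simple '' K) ↔
        t ∈ Subgroup.closure (cs.simple '' K)) := by
    intro x y t hx
    rw [Subgroup.mul_mem_cancel_right _ (inv_mem hx), Subgroup.mul_mem_cancel_left _ hx]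
  induction hg using Subgroup.closure_induction with
  | mem x hx =>
    intro t ht
    obtain ⟨k, hk, rfl⟩ := hx
    rw [eta_simple] at ht
    have : t = cs.simple k := by
      by_contra h; simp [h] at ht
    rw [this]
    exact Subgroup.subset_closure ⟨k, hk, rfl⟩
  | one => intro t ht; exact absurd (eta_one cs t) ht
  | mul x y hx' hy' hx hy =>
    intro t ht
    rw [eta_mul] at ht
    by_cases h : eta cs y t = 0
    · rw [h, zero_add] at ht
      exact (hmul y 1 t hy').1 (hx _ ht)
    · exact hy t h
  | inv x hx' hx =>
    intro t ht
    have h := eta_mul cs x x⁻¹ t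
    rw [mul_inv_cancel, eta_one] at h
    have h2 : eta cs x (x⁻¹ * t * x⁻¹⁻¹) ≠ 0 := by
      intro h0; rw [h0, add_zero] at h; exact ht h.symm
    exact (hmul x⁻¹ 1 t (inv_mem hx')).1 (hx _ h2)

/-- If `j ∉ K`, `s j * s k * s j ∈ W_K` and `s k ∈ W_K`, then `s k`, `s j` commute. -/
lemma commute_of_conj_mem (K : Set B) (j k : B) (hj : j ∉ K)
    (hk : cs.simple k ∈ Subgroup.closure (cs.simple '' K))
    (h : cs.simple j * cs.simple k * cs.simple j ∈ Subgroup.closure (cs.simple '' K)) :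
    cs.simple k * cs.simple j = cs.simple j * cs.simple k := by
  have hjn := simple_notMem cs K j hj
  set x := cs.simple j * cs.simple k * cs.simple j with hx
  have hxj : x * cs.simple j = cs.simple j * cs.simple k := by
    rw [hx, mul_assoc, cs.simple_mul_simple_self, mul_one]
  have hηx : eta cs x (cs.simple j) = 0 := by
    by_contra h0; exact hjn (eta_mem cs K x h _ h0)
  have hηk : eta cs (cs.simple k) (cs.simple j) = 0 := by
    by_contra h0; exact hjn (eta_mem cs K _ hk _ h0)
  have e1 := eta_mul cs x (cs.simple j) (cs.simple j)
  rw [hxj, eta_mul, hηk, mul_inv_cancel_right, hηx, eta_simple, eta_simple] at e1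
  by_cases hc : cs.simple k * cs.simple j * (cs.simple k)⁻¹ = cs.simple j
  · rwa [mul_inv_eq_iff_eq_mul] at hc
  · rw [if_neg hc] at e1; simp at e1

/-- The inductive step: elements of `W_K` all of whose inversions are conjugated into `W_K`. -/
lemma mem_of_inversions (K : Set B) (i j : B) (hj : j ∉ K)
    (hnc : cs.simple i * cs.simple j ≠ cs.simple j * cs.simple i) (n : ℕ) :
    ∀ y ∈ Subgroup.closure (cs.simple '' K), cs.length y = n →
      (∀ t, eta cs y t ≠ 0 →
        cs.simple j * t * cs.simple j ∈ Subgroup.closure (cs.simple '' K)) →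
      y ∈ Subgroup.closure (cs.simple '' (K \ {i})) := by
  induction n using Nat.strong_induction_on with
  | _ n ih =>
  intro y hy hn hP
  by_cases hy1 : y = 1
  · rw [hy1]; exact one_mem _
  obtain ⟨k, hk⟩ := cs.exists_rightDescent_of_ne_one hy1
  have hk' : cs.length (y * cs.simple k) < cs.length y := hk
  have hηk := eta_of_length_lt cs y k hk'
  have hkK := eta_mem cs K y hy _ hηk
  have hc := commute_of_conj_mem cs K j k hj hkK (hP _ hηk)
  have hkK' : k ∈ K := by
    by_contra h; exact simple_notMem cs K k h hkK
  have hki : k ≠ i := by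
    rintro rfl; exact hnc hc
  have hmem : cs.simple k ∈ Subgroup.closure (cs.simple '' (K \ {i})) :=
    Subgroup.subset_closure ⟨k, ⟨hkK', hki⟩, rfl⟩
  have := ih _ (hn ▸ hk') (y * cs.simple k) (mul_mem hy hkK) rfl (by
    intro t ht
    rw [eta_mul, eta_simple] at ht
    by_cases htk : t = cs.simple k
    · rw [htk]; exact hP _ hηk
    · rw [if_neg htk, zero_add] at ht
      have h := hP _ ht
      have e : cs.simple j * (cs.simple k * t * (cs.simple k)⁻¹) * cs.simple j =
          cs.simple k * (cs.simple j * t * cs.simple j) * cs.simple k := by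
        rw [cs.inv_simple]
        calc _ = (cs.simple j * cs.simple k) * t * (cs.simple k * cs.simple j) := by group
          _ = (cs.simple k * cs.simple j) * t * (cs.simple j * cs.simple k) := by rw [hc]
          _ = _ := by group
      rw [e] at h
      rwa [Subgroup.mul_mem_cancel_right _ hkK, Subgroup.mul_mem_cancel_left _ hkK] at h)
  rwa [Subgroup.mul_mem_cancel_right _ hmem] at this

end cocycle

end ProjRes


/-- Key projection step in the proof of the main Theorem: if the simple reflections
`s i` and `s j` do not commute, `i ∈ K` and `j ∉ K`, then the projection of any chamber
of the residue `W_K` to the adjacent residue `s j • W_K` lies in the smaller residue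
`s j • W_{K \ {i}}`. -/
theorem projection_into_smaller_residue
    {B : Type*} {W : Type*} [Group W] [Finite W] {M : CoxeterMatrix B}
    (cs : CoxeterSystem M W)
    (i j : B) (hij : i ≠ j)
    (hnc : cs.simple i * cs.simple j ≠ cs.simple j * cs.simple i)
    (K : Set B) (hiK : i ∈ K) (hjK : j ∉ K)
    (WK WK' : Subgroup W)
    (hWK : WK = Subgroup.closure (cs.simple '' K))
    (hWK' : WK' = Subgroup.closure (cs.simple '' (K \ {i})))
    (w : W) (hw : w ∈ WK)
    (u : W) (hu : (cs.simple j)⁻¹ * u ∈ WK)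
    (humin : ∀ v : W, (cs.simple j)⁻¹ * v ∈ WK →
      cs.length (w⁻¹ * u) ≤ cs.length (w⁻¹ * v)) :
    (cs.simple j)⁻¹ * u ∈ WK' := by

  subst hWK hWK'
  set x := (cs.simple j)⁻¹ * u with hx
  have hz : w⁻¹ * u = w⁻¹ * cs.simple j * x := by rw [hx]; group
  have hjn := ProjRes.simple_notMem cs K j hjK
  rw [← inv_mem_iff]
  refine ProjRes.mem_of_inversions cs K i j hjK hnc _ x⁻¹ (inv_mem hu) rfl ?_
  intro t ht
  have htK := ProjRes.eta_mem cs K _ (inv_mem hu) t ht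
  -- `x⁻¹ t x` is not an inversion of `w⁻¹ u`
  have h0 : ProjRes.eta cs (w⁻¹ * u) (x⁻¹ * t * x) = 0 := by
    by_contra h
    have h1 := ProjRes.length_lt_of_eta cs _ _ h
    have h2 := humin (u * (x⁻¹ * t * x)) (by
      rw [← mul_assoc]
      exact mul_mem hu (mul_mem (mul_mem (inv_mem hu) htK) hu))
    rw [← mul_assoc] at h2
    omega
  rw [hz, ProjRes.eta_mul, ProjRes.eta_mul cs w⁻¹] at h0
  have ht2 : x * (x⁻¹ * t * x) * x⁻¹ = t := by group
  have htj : t ≠ cs.simple j := fun h => hjn (h ▸ htK)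
  rw [ht2, ProjRes.eta_simple, if_neg htj, zero_add] at h0
  have h3 := ProjRes.eta_mul cs x x⁻¹ t
  rw [mul_inv_cancel, ProjRes.eta_one, inv_inv] at h3
  have h4 : ProjRes.eta cs x (x⁻¹ * t * x) ≠ 0 := by
    intro h; rw [h, add_zero] at h3; exact ht h3.symm
  have h5 : ProjRes.eta cs w⁻¹ (cs.simple j * t * (cs.simple j)⁻¹) ≠ 0 := by
    intro h; rw [h, add_zero] at h0; exact h4 h0
  have h6 := ProjRes.eta_mem cs K _ (inv_mem hw) _ h5
  rwa [cs.inv_simple] at h6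
end
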